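/- arXiv:1402.0156 — 4 statements merged into one kernel-verified Lean document; each statement's English description precedes it below -/
import Mathlib

section
/- For any nonempty set S ⊆ G and any integer t ≥ 0, the probability, starting from the stationary distribution, that the return time to S exceeds t satisfies Pr_π[T_S^+ > t] ≤ (1 − (1−λ)·π(S))^{t/2}. -/
open MeasureTheory Finset
open scoped ENNReal

namespace HM

variable {G : Type*} [Fintype G] [DecidableEq G]

/-- `P` is a stochastic (transition) matrix. -/
def IsStochastic (P : Matrix G G ℝ) : Prop :=
  (∀ x y, 0 ≤ P x y) ∧ ∀ x, ∑ y, P x y = 1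

/-- Irreducibility: every state reaches every other state. -/
def IsIrreducible (P : Matrix G G ℝ) : Prop :=
  ∀ x y : G, ∃ t : ℕ, 0 < (P ^ t) x y

/-- Aperiodicity: the gcd of return times is `1` at every state. -/
def IsAperiodic (P : Matrix G G ℝ) : Prop :=
  ∀ x : G, ∀ d : ℕ, (∀ t : ℕ, 0 < (P ^ t) x x → d ∣ t) → d = 1

/-- `P` is reversible with respect to the full-support probability vector `pi`. -/
def IsReversible (P : Matrix G G ℝ) (pi : G → ℝ) : Prop :=
  (∀ x, 0 < pi x) ∧ (∑ x, pi x = 1) ∧ ∀ x y, pi x * P x y = pi y * P y x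

variable [MeasurableSpace G]

/-- `μ x` is the law of the Markov chain with transition matrix `P` started at `x`:
all finite-dimensional (cylinder) probabilities are given by products of transition
probabilities. -/
def IsMarkovChain (P : Matrix G G ℝ) (μ : G → Measure (ℕ → G)) : Prop :=
  (∀ x, IsProbabilityMeasure (μ x)) ∧
  ∀ (x : G) (t : ℕ) (w : ℕ → G),
    μ x {ω | ∀ i ≤ t, ω i = w i} =
      ENNReal.ofReal ((if w 0 = x then 1 else 0) * ∏ i ∈ Finset.range t, P (w i) (w (i + 1)))

/-- Hitting time `T_S = inf {t ≥ 0 : X_t ∈ S}`, with value `⊤` if `S` is never hit. -/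
noncomputable def hit (S : Set G) (ω : ℕ → G) : ℕ∞ :=
  sInf ((↑) '' {n : ℕ | ω n ∈ S})

/-- Return time `T_S^+ = inf {t ≥ 1 : X_t ∈ S}`, with value `⊤` if `S` is never hit. -/
noncomputable def hitPlus (S : Set G) (ω : ℕ → G) : ℕ∞ :=
  sInf ((↑) '' {n : ℕ | 1 ≤ n ∧ ω n ∈ S})

/-- The event `X_{T_S} = x` (in particular `T_S < ∞`). -/
def hitsAt (S : Set G) (x : G) : Set (ℕ → G) :=
  {ω | ∃ n : ℕ, hit S ω = (n : ℕ∞) ∧ ω n = x}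

/-- Harmonic measure on `S` from `y`: `h_{y,S}(x) = Pr_y[X_{T_S} = x]`. -/
noncomputable def harm (μ : G → Measure (ℕ → G)) (S : Set G) (y x : G) : ℝ :=
  (μ y (hitsAt S x)).toReal

/-- Harmonic measure on `S` from the stationary distribution:
`h_S(x) = ∑_y π(y) h_{y,S}(x)`. -/
noncomputable def harmStat (pi : G → ℝ) (μ : G → Measure (ℕ → G)) (S : Set G) (x : G) : ℝ :=
  ∑ y, pi y * harm μ S y x

/-- `π(S) = ∑_{x ∈ S} π(x)`. -/
noncomputable def piOf (pi : G → ℝ) (S : Set G) : ℝ :=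
  ∑ x, S.indicator pi x

/-- `λ = max_{j > 1} |λ_j|`, via the variational characterization: the largest absolute
value of the quadratic form of `P` on the orthogonal complement of the constants in
`L²(π)`.  For a reversible chain this equals the largest absolute value of a
non-Perron eigenvalue of `P`. -/
noncomputable def lam (P : Matrix G G ℝ) (pi : G → ℝ) : ℝ :=
  sSup {r : ℝ | ∃ f : G → ℝ, ∑ x, pi x * f x = 0 ∧ ∑ x, pi x * f x ^ 2 = 1 ∧
    r = |∑ x, pi x * (f x * ∑ y, P x y * f y)|}

/-- `π_min = min_x π(x)`. -/
noncomputable def pimin (pi : G → ℝ) : ℝ := ⨅ x, pi x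

/-- `π_max = max_x π(x)`. -/
noncomputable def pimax (pi : G → ℝ) : ℝ := ⨆ x, pi x

/-- `u(P) = min_{x ≠ y} Pr_x[T_y < T_x^+]`. -/
noncomputable def uP (μ : G → Measure (ℕ → G)) : ℝ :=
  sInf {r : ℝ | ∃ x y : G, x ≠ y ∧
    r = (μ x {ω | hit {y} ω < hitPlus {x} ω}).toReal}

/-- `E_x[T_S^+]` (as an extended nonnegative real, then converted to `ℝ`). -/
noncomputable def expHitPlus (μ : G → Measure (ℕ → G)) (S : Set G) (x : G) : ℝ :=
  (∫⁻ ω, (hitPlus S ω : ℝ≥0∞) ∂ μ x).toReal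

/-- The number of distinct states visited strictly before the return time `T_S^+`,
i.e. `|{X_0, X_1, …, X_{T_S^+ − 1}}|`. -/
noncomputable def visited (S : Set G) (ω : ℕ → G) : ℕ :=
  Set.ncard {g : G | ∃ n : ℕ, (n : ℕ∞) < hitPlus S ω ∧ ω n = g}



open Classical in
/-- `uu P S k y = Pr_y[X_1, …, X_k ∉ S]`. -/
noncomputable def uu {G : Type*} [Fintype G] (P : Matrix G G ℝ) (S : Set G) : ℕ → G → ℝ
  | 0 => fun _ => 1
  | k + 1 => fun y => ∑ z, P y z * (if z ∈ S then 0 else uu P S k z)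

open Classical in
/-- `ff = 1_A uu`. -/
noncomputable def ff {G : Type*} [Fintype G] (P : Matrix G G ℝ) (S : Set G) (k : ℕ) (z : G) : ℝ :=
  if z ∈ S then 0 else uu P S k z

section aux
variable {G : Type*} [Fintype G] [DecidableEq G] (P : Matrix G G ℝ) (pi : G → ℝ) (S : Set G)

lemma uu_succ (k : ℕ) (y : G) : uu P S (k+1) y = ∑ z, P y z * ff P S k z := rfl

lemma uu_nonneg (hP : IsStochastic P) (k : ℕ) (y : G) : 0 ≤ uu P S k y := by
  induction k generalizing y with
  | zero => simp [uu]
  | succ k ih =>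
    rw [uu_succ]
    refine Finset.sum_nonneg fun z _ => mul_nonneg (hP.1 _ _) ?_
    unfold ff; split_ifs
    · exact le_rfl
    · exact ih z

lemma ff_nonneg (hP : IsStochastic P) (k : ℕ) (y : G) : 0 ≤ ff P S k y := by
  unfold ff; split_ifs
  · exact le_rfl
  · exact uu_nonneg P S hP k y

lemma ff_le_uu (hP : IsStochastic P) (k : ℕ) (y : G) : ff P S k y ≤ uu P S k y := by
  unfold ff; split_ifs
  · exact uu_nonneg P S hP k y
  · exact le_rfl

lemma stat (hP : IsStochastic P) (hrev : IsReversible P pi) (f : G → ℝ) :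
    ∑ x, pi x * ∑ y, P x y * f y = ∑ x, pi x * f x := by
  simp only [Finset.mul_sum]
  rw [Finset.sum_comm]
  refine Finset.sum_congr rfl fun y _ => ?_
  calc ∑ x, pi x * (P x y * f y) = ∑ x, P y x * (pi y * f y) := by
        refine Finset.sum_congr rfl fun x _ => ?_
        have := hrev.2.2 x y
        linear_combination f y * this
    _ = pi y * f y := by rw [← Finset.sum_mul, hP.2, one_mul]

lemma symmP (hrev : IsReversible P pi) (f g : G → ℝ) :
    ∑ x, pi x * (f x * ∑ y, P x y * g y) = ∑ x, pi x * (g x * ∑ y, P x y * f y) := by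
  simp only [Finset.mul_sum]
  rw [Finset.sum_comm]
  refine Finset.sum_congr rfl fun y _ => Finset.sum_congr rfl fun x _ => ?_
  have := hrev.2.2 x y
  linear_combination f x * g y * this

lemma form_abs_le (hP : IsStochastic P) (hrev : IsReversible P pi) (f : G → ℝ) :
    |∑ x, pi x * (f x * ∑ y, P x y * f y)| ≤ ∑ x, pi x * f x ^ 2 := by
  have h1 : ∑ x, pi x * f x ^ 2 = ∑ x, ∑ y, pi x * P x y * ((f x ^ 2 + f y ^ 2) / 2) := by
    have a : ∑ x, ∑ y, pi x * P x y * ((f x ^ 2 + f y ^ 2) / 2)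
        = (∑ x, pi x * f x ^ 2 * ∑ y, P x y) / 2 + (∑ x, pi x * ∑ y, P x y * f y ^ 2) / 2 := by
      rw [Finset.sum_div, Finset.sum_div, ← Finset.sum_add_distrib]
      refine Finset.sum_congr rfl fun x _ => ?_
      rw [Finset.mul_sum, Finset.mul_sum, Finset.sum_div, Finset.sum_div,
        ← Finset.sum_add_distrib]
      refine Finset.sum_congr rfl fun y _ => ?_
      ring
    rw [a, stat P pi hP hrev (fun y => f y ^ 2)]
    simp only [hP.2, mul_one]
    ring
  rw [h1]
  refine (Finset.abs_sum_le_sum_abs _ _).trans (Finset.sum_le_sum fun x _ => ?_)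
  have : pi x * (f x * ∑ y, P x y * f y) = ∑ y, pi x * P x y * (f x * f y) := by
    rw [Finset.mul_sum, Finset.mul_sum]
    exact Finset.sum_congr rfl fun y _ => by ring
  rw [this]
  refine (Finset.abs_sum_le_sum_abs _ _).trans (Finset.sum_le_sum fun y _ => ?_)
  have h0 : 0 ≤ pi x * P x y := mul_nonneg (hrev.1 x).le (hP.1 x y)
  rw [abs_mul, abs_of_nonneg h0]
  refine mul_le_mul_of_nonneg_left ?_ h0
  rw [abs_le]
  constructor <;> nlinarith [sq_nonneg (f x + f y), sq_nonneg (f x - f y)]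

lemma lam_nonneg : 0 ≤ lam P pi := by
  apply Real.sSup_nonneg
  rintro r ⟨f, -, -, rfl⟩
  exact abs_nonneg _

lemma lam_le_one (hP : IsStochastic P) (hrev : IsReversible P pi) : lam P pi ≤ 1 := by
  apply Real.sSup_le _ zero_le_one
  rintro r ⟨f, -, h, rfl⟩
  exact (form_abs_le P pi hP hrev f).trans h.le

lemma form_le_lam (hP : IsStochastic P) (hrev : IsReversible P pi) (g : G → ℝ)
    (hg : ∑ x, pi x * g x = 0) :
    ∑ x, pi x * (g x * ∑ y, P x y * g y) ≤ lam P pi * ∑ x, pi x * g x ^ 2 := by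
  have hN : 0 ≤ ∑ x, pi x * g x ^ 2 :=
    Finset.sum_nonneg fun x _ => mul_nonneg (hrev.1 x).le (sq_nonneg _)
  rcases hN.eq_or_lt with h | h
  · have := form_abs_le P pi hP hrev g
    rw [← h] at this ⊢
    rw [mul_zero]
    exact (le_abs_self _).trans this
  · set N := ∑ x, pi x * g x ^ 2 with hNd
    have hs : (Real.sqrt N)⁻¹ ^ 2 = N⁻¹ := by rw [inv_pow, Real.sq_sqrt hN]
    set c := (Real.sqrt N)⁻¹ with hc
    have key : |∑ x, pi x * ((c * g x) * ∑ y, P x y * (c * g y))| ≤ lam P pi := by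
      apply le_csSup
      · refine ⟨1, ?_⟩
        rintro r ⟨f, -, h, rfl⟩
        exact (form_abs_le P pi hP hrev f).trans h.le
      · refine ⟨fun x => c * g x, ?_, ?_, rfl⟩
        · have : ∑ x, pi x * (c * g x) = c * ∑ x, pi x * g x := by
            rw [Finset.mul_sum]; exact Finset.sum_congr rfl fun y _ => by ring
          rw [this, hg, mul_zero]
        · have : ∑ x, pi x * (c * g x) ^ 2 = c ^ 2 * N := by
            rw [hNd, Finset.mul_sum]; exact Finset.sum_congr rfl fun y _ => by ring
          rw [this, hs, inv_mul_cancel₀ h.ne']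
    have e : ∑ x, pi x * ((c * g x) * ∑ y, P x y * (c * g y))
        = N⁻¹ * ∑ x, pi x * (g x * ∑ y, P x y * g y) := by
      rw [← hs, Finset.mul_sum]
      refine Finset.sum_congr rfl fun x _ => ?_
      have : ∑ y, P x y * (c * g y) = c * ∑ y, P x y * g y := by
        rw [Finset.mul_sum]; exact Finset.sum_congr rfl fun y _ => by ring
      rw [this]; ring
    rw [e] at key
    have k2 := (le_abs_self _).trans key
    rw [inv_mul_le_iff₀ h] at k2
    linarith

open Classical in
lemma piOf_compl (hrev : IsReversible P pi) :
    ∑ x, pi x * (if x ∈ S then (0:ℝ) else 1) = 1 - piOf pi S := by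
  have h1 : 1 - piOf pi S = ∑ x, pi x - piOf pi S := by rw [hrev.2.1]
  rw [h1, piOf, ← Finset.sum_sub_distrib]
  refine Finset.sum_congr rfl fun x _ => ?_
  by_cases h : x ∈ S <;> simp [h]

open Classical in
lemma form_le (hP : IsStochastic P) (hrev : IsReversible P pi) (f : G → ℝ)
    (hf : ∀ x ∈ S, f x = 0) :
    ∑ x, pi x * (f x * ∑ y, P x y * f y)
      ≤ (1 - (1 - lam P pi) * piOf pi S) * ∑ x, pi x * f x ^ 2 := by
  set c := ∑ x, pi x * f x with hc
  set N := ∑ x, pi x * f x ^ 2 with hN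
  have h1 := hrev.2.1
  have g0 : ∑ x, pi x * (f x - c) = 0 := by
    simp only [mul_sub, Finset.sum_sub_distrib, ← Finset.sum_mul, h1]
    rw [← hc]; ring
  have hg := form_le_lam P pi hP hrev (fun x => f x - c) g0
  have e1 : ∑ x, pi x * (f x - c) ^ 2 = N - c ^ 2 := by
    have : ∀ x, pi x * (f x - c) ^ 2 = pi x * f x ^ 2 - 2 * c * (pi x * f x) + c ^ 2 * pi x :=
      fun x => by ring
    simp only [this, Finset.sum_add_distrib, Finset.sum_sub_distrib, ← Finset.mul_sum, h1]
    rw [← hc, ← hN]; ring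
  have e2 : ∑ x, pi x * ((f x - c) * ∑ y, P x y * (f y - c))
      = ∑ x, pi x * (f x * ∑ y, P x y * f y) - c ^ 2 := by
    have : ∀ x, pi x * ((f x - c) * ∑ y, P x y * (f y - c))
        = pi x * (f x * ∑ y, P x y * f y) - c * (pi x * f x)
          - c * (pi x * ∑ y, P x y * f y) + c ^ 2 * pi x := by
      intro x
      simp only [mul_sub, Finset.sum_sub_distrib, ← Finset.sum_mul, hP.2]
      ring
    simp only [this, Finset.sum_add_distrib, Finset.sum_sub_distrib, ← Finset.mul_sum, h1]
    rw [stat P pi hP hrev f, ← hc]; ring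
  rw [e1, e2] at hg
  have cs : c ^ 2 ≤ (1 - piOf pi S) * N := by
    rw [← piOf_compl P pi S hrev, hc, hN]
    refine Finset.sum_sq_le_sum_mul_sum_of_sq_eq_mul _ ?_ ?_ ?_
    · intro x _
      exact mul_nonneg (hrev.1 x).le (by split_ifs <;> norm_num)
    · intro x _
      exact mul_nonneg (hrev.1 x).le (sq_nonneg _)
    · intro x _
      by_cases h : x ∈ S
      · simp [hf x h]
      · simp [h]; ring
  have := lam_le_one P pi hP hrev
  nlinarith [mul_le_mul_of_nonneg_left cs (sub_nonneg.2 this)]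

lemma ff_zero_on (k : ℕ) : ∀ x ∈ S, ff P S k x = 0 := fun x h => by simp [ff, h]

lemma inner_shift (hrev : IsReversible P pi) (i j : ℕ) :
    ∑ x, pi x * (ff P S (i+1) x * ff P S j x) = ∑ x, pi x * (ff P S i x * ff P S (j+1) x) := by
  have aux : ∀ i j, ∑ x, pi x * (ff P S j x * ff P S (i+1) x)
      = ∑ x, pi x * (ff P S j x * ∑ y, P x y * ff P S i y) := by
    intro i j
    refine Finset.sum_congr rfl fun x _ => ?_
    by_cases h : x ∈ S
    · simp [ff_zero_on P S _ x h]
    · congr 2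
      rw [← uu_succ]
      simp [ff, h]
  rw [aux, symmP P pi hrev, ← aux]
  exact Finset.sum_congr rfl fun x _ => by ring

lemma inner_shift2 (hrev : IsReversible P pi) (i j : ℕ) :
    ∑ x, pi x * (ff P S i x * ff P S j x) = ∑ x, pi x * (ff P S 0 x * ff P S (i + j) x) := by
  induction i generalizing j with
  | zero => simp
  | succ i ih =>
    rw [inner_shift P pi S hrev, ih, show i + (j + 1) = i + 1 + j by omega]

/-- `pp t = Pr_π[X_1..X_t ∉ S]`. -/
noncomputable def pp (t : ℕ) : ℝ := ∑ y, pi y * uu P S t y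

lemma pp_succ (hP : IsStochastic P) (hrev : IsReversible P pi) (t : ℕ) :
    pp P pi S (t + 1) = ∑ x, pi x * ff P S t x := by
  simp only [pp, uu_succ]
  exact stat P pi hP hrev _

lemma pp_inner (hP : IsStochastic P) (hrev : IsReversible P pi) (i j : ℕ) :
    ∑ x, pi x * (ff P S i x * ff P S j x) = pp P pi S (i + j + 1) := by
  rw [inner_shift2 P pi S hrev, pp_succ P pi S hP hrev]
  refine Finset.sum_congr rfl fun x _ => ?_
  by_cases h : x ∈ S <;> simp [ff, h, uu]

lemma pp_anti (hP : IsStochastic P) (hrev : IsReversible P pi) (t : ℕ) :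
    pp P pi S (t + 1) ≤ pp P pi S t := by
  rw [pp_succ P pi S hP hrev]
  exact Finset.sum_le_sum fun x _ =>
    mul_le_mul_of_nonneg_left (ff_le_uu P S hP t x) (hrev.1 x).le

lemma pp_even (hP : IsStochastic P) (hrev : IsReversible P pi) (j : ℕ) :
    pp P pi S (2 * j + 2) ≤ (1 - (1 - lam P pi) * piOf pi S) * pp P pi S (2 * j + 1) := by
  have h := form_le P pi S hP hrev (ff P S j) (ff_zero_on P S j)
  have e1 : ∑ x, pi x * ff P S j x ^ 2 = pp P pi S (2 * j + 1) := by
    rw [two_mul, ← pp_inner P pi S hP hrev]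
    exact Finset.sum_congr rfl fun x _ => by ring
  have e2 : ∑ x, pi x * (ff P S j x * ∑ y, P x y * ff P S j y) = pp P pi S (2 * j + 2) := by
    rw [show 2 * j + 2 = j + (j + 1) + 1 by ring, ← pp_inner P pi S hP hrev]
    refine Finset.sum_congr rfl fun x _ => ?_
    by_cases h : x ∈ S
    · simp [ff_zero_on P S _ x h]
    · congr 2
      rw [← uu_succ]
      simp [ff, h]
  rwa [e1, e2] at h

lemma piOf_nonneg (hrev : IsReversible P pi) : 0 ≤ piOf pi S :=
  Finset.sum_nonneg fun x _ => Set.indicator_nonneg (fun y _ => (hrev.1 y).le) x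

lemma piOf_le_one (hrev : IsReversible P pi) : piOf pi S ≤ 1 := by
  rw [← hrev.2.1]
  exact Finset.sum_le_sum fun x _ => Set.indicator_le_self' (fun y _ => (hrev.1 y).le) x

lemma pp_bound (hP : IsStochastic P) (hrev : IsReversible P pi) (t : ℕ) :
    pp P pi S t ≤ (1 - (1 - lam P pi) * piOf pi S) ^ ((t : ℝ) / 2) := by
  have hl0 := lam_nonneg P pi
  have hl1 := lam_le_one P pi hP hrev
  have hs0 := piOf_nonneg P pi S hrev
  have hs1 := piOf_le_one P pi S hrev
  set r := 1 - (1 - lam P pi) * piOf pi S with hr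
  have hr0 : 0 ≤ r := by nlinarith
  have hr1 : r ≤ 1 := by nlinarith
  have p1 : pp P pi S 1 ≤ r := by
    have : pp P pi S 1 = 1 - piOf pi S := by
      rw [pp_succ P pi S hP hrev, ← piOf_compl P pi S hrev]
      rfl
    rw [this]; nlinarith
  have odd : ∀ j, pp P pi S (2 * j + 1) ≤ r ^ (j + 1) := by
    intro j
    induction j with
    | zero => simpa using p1
    | succ j ih =>
      have a := pp_anti P pi S hP hrev (2 * j + 2)
      have b := pp_even P pi S hP hrev j
      have c := mul_le_mul_of_nonneg_left ih hr0
      calc pp P pi S (2 * (j + 1) + 1) ≤ r * r ^ (j + 1) := a.trans (b.trans c)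
        _ = _ := by ring
  rcases Nat.even_or_odd' t with ⟨j, rfl | rfl⟩
  · have e : ((2 * j : ℕ) : ℝ) / 2 = (j : ℝ) := by push_cast; ring
    rw [e, Real.rpow_natCast]
    cases j with
    | zero => simp [pp, uu, hrev.2.1]
    | succ j => exact (pp_anti P pi S hP hrev (2 * j + 1)).trans (odd j)
  · rcases hr0.eq_or_lt with h | h
    · refine (odd j).trans ?_
      rw [← h]
      rw [zero_pow (by omega)]
      exact Real.rpow_nonneg le_rfl _
    · refine (odd j).trans ?_
      rw [← Real.rpow_natCast]
      apply Real.rpow_le_rpow_of_exponent_ge h hr1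
      push_cast; linarith

variable [MeasurableSpace G]

open Classical in
lemma meas_le (hP : IsStochastic P) (μ : G → Measure (ℕ → G)) (hμ : IsMarkovChain P μ)
    (x : G) (t : ℕ) : ∀ (k : ℕ) (w : ℕ → G),
    μ x {ω | (∀ i ≤ k, ω i = w i) ∧ ∀ i, k < i → i ≤ k + t → ω i ∉ S} ≤
      ENNReal.ofReal (((if w 0 = x then 1 else 0) * ∏ i ∈ Finset.range k, P (w i) (w (i + 1)))
        * uu P S t (w k)) := by
  induction t with
  | zero =>
    intro k w
    simp only [uu, mul_one]
    rw [← hμ.2 x k w]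
    exact measure_mono fun ω h => h.1
  | succ t ih =>
    intro k w
    set C := (if w 0 = x then (1:ℝ) else 0) * ∏ i ∈ Finset.range k, P (w i) (w (i + 1)) with hC
    have hC0 : 0 ≤ C := mul_nonneg (by split_ifs <;> norm_num)
      (Finset.prod_nonneg fun i _ => hP.1 _ _)
    have sub : {ω : ℕ → G | (∀ i ≤ k, ω i = w i) ∧ ∀ i, k < i → i ≤ k + (t + 1) → ω i ∉ S} ⊆
        ⋃ z ∈ (Finset.univ.filter (fun z : G => z ∉ S)),
          {ω | (∀ i ≤ k + 1, ω i = Function.update w (k+1) z i) ∧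
            ∀ i, k + 1 < i → i ≤ k + 1 + t → ω i ∉ S} := by
      rintro ω ⟨h1, h2⟩
      simp only [Set.mem_iUnion, Finset.mem_filter, Finset.mem_univ, true_and]
      refine ⟨ω (k+1), h2 _ (by omega) (by omega), ?_, ?_⟩
      · intro i hi
        by_cases e : i = k + 1
        · subst e; simp
        · rw [Function.update_of_ne e]; exact h1 i (by omega)
      · intro i hi hi'
        exact h2 i (by omega) (by omega)
    refine (measure_mono sub).trans ((measure_biUnion_finset_le _ _).trans ?_)
    refine (Finset.sum_le_sum fun z _ => ih (k+1) (Function.update w (k+1) z)).trans ?_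
    have e : ∀ z, ((if Function.update w (k+1) z 0 = x then (1:ℝ) else 0) *
        ∏ i ∈ Finset.range (k+1), P (Function.update w (k+1) z i)
          (Function.update w (k+1) z (i + 1))) * uu P S t (Function.update w (k+1) z (k+1))
        = C * (P (w k) z * uu P S t z) := by
      intro z
      rw [Finset.prod_range_succ, Function.update_of_ne (by omega : 0 ≠ k + 1),
        Function.update_self, Function.update_of_ne (by omega : k ≠ k + 1)]
      have : ∏ i ∈ Finset.range k, P (Function.update w (k+1) z i)
          (Function.update w (k+1) z (i + 1)) = ∏ i ∈ Finset.range k, P (w i) (w (i + 1)) := by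
        refine Finset.prod_congr rfl fun i hi => ?_
        have := Finset.mem_range.1 hi
        rw [Function.update_of_ne (by omega), Function.update_of_ne (by omega)]
      rw [this, hC]; ring
    simp only [e]
    rw [← ENNReal.ofReal_sum_of_nonneg]
    · apply ENNReal.ofReal_le_ofReal
      rw [← Finset.mul_sum, uu_succ, Finset.sum_filter]
      refine le_of_eq ?_
      congr 1
      refine Finset.sum_congr rfl fun z _ => ?_
      by_cases h : z ∈ S <;> simp [h, ff]
    · intro z _
      exact mul_nonneg hC0 (mul_nonneg (hP.1 _ _) (uu_nonneg P S hP t z))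

open Classical in
lemma meas_hit (hP : IsStochastic P) (μ : G → Measure (ℕ → G)) (hμ : IsMarkovChain P μ)
    (x : G) (t : ℕ) : (μ x {ω | (t : ℕ∞) < hitPlus S ω}).toReal ≤ uu P S t x := by
  refine ENNReal.toReal_le_of_le_ofReal (uu_nonneg P S hP t x) ?_
  have sub : {ω : ℕ → G | (t : ℕ∞) < hitPlus S ω} ⊆ ⋃ z ∈ (Finset.univ : Finset G),
      {ω | (∀ i ≤ 0, ω i = (fun _ => z) i) ∧ ∀ i, 0 < i → i ≤ 0 + t → ω i ∉ S} := by
    intro ω h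
    simp only [Set.mem_iUnion, Finset.mem_univ, exists_true_left]
    refine ⟨ω 0, ?_, ?_⟩
    · intro i hi
      rw [Nat.le_zero.1 hi]
    · intro i hi hi' hS
      have h1 : hitPlus S ω ≤ (i : ℕ∞) := sInf_le ⟨i, ⟨hi, hS⟩, rfl⟩
      have h2 : (t : ℕ∞) < (i : ℕ∞) := lt_of_lt_of_le h h1
      have := Nat.cast_lt.1 h2
      omega
  refine (measure_mono sub).trans ((measure_biUnion_finset_le _ _).trans ?_)
  refine (Finset.sum_le_sum fun z _ => meas_le P S hP μ hμ x t 0 (fun _ => z)).trans ?_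
  rw [← ENNReal.ofReal_sum_of_nonneg]
  · simp
  · intro z _
    refine mul_nonneg ?_ (uu_nonneg P S hP t _)
    simp only [Finset.range_zero, Finset.prod_empty, mul_one]
    split_ifs <;> norm_num

end aux

/-- For any nonempty `S ⊆ G` and any `t ≥ 0`,
`Pr_π[T_S^+ > t] ≤ (1 − (1−λ)·π(S))^(t/2)`. -/
theorem stmt0 {G : Type*} [Fintype G] [DecidableEq G] [MeasurableSpace G] [MeasurableSingletonClass G]
    (P : Matrix G G ℝ) (pi : G → ℝ) (μ : G → Measure (ℕ → G))
    (hP : IsStochastic P) (hirr : IsIrreducible P) (hap : IsAperiodic P)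
    (hrev : IsReversible P pi) (hμ : IsMarkovChain P μ)
    (S : Set G) (hS : S.Nonempty) (t : ℕ) :
    ∑ y, pi y * (μ y {ω | (t : ℕ∞) < hitPlus S ω}).toReal
      ≤ (1 - (1 - lam P pi) * piOf pi S) ^ ((t : ℝ) / 2) := by
  refine le_trans ?_ (pp_bound P pi S hP hrev t)
  exact Finset.sum_le_sum fun y _ =>
    mul_le_mul_of_nonneg_left (meas_hit P S hP μ hμ y t) (hrev.1 y).le

end HM
end

section
/- For any nonempty set S ⊆ G, any x ∈ S and any y ∈ G \ S, the path-reversal identity π(y)·Pr_y[X_{T_S} = x, T_S < T_y^+] = π(x)·Pr_x[T_y < T_S^+] holds. -/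
open MeasureTheory Finset
open scoped ENNReal

namespace HM

variable {G : Type*} [Fintype G] [DecidableEq G]

variable [MeasurableSpace G]

theorem hit_eq_coe {G : Type*} (S : Set G) (ω : ℕ → G) (n : ℕ) :
    hit S ω = (n : ℕ∞) ↔ ω n ∈ S ∧ ∀ i < n, ω i ∉ S := by
  unfold hit
  constructor
  · intro h
    have hne : ((↑) '' {n : ℕ | ω n ∈ S} : Set ℕ∞).Nonempty := by
      by_contra hc
      rw [Set.not_nonempty_iff_eq_empty] at hc
      rw [hc] at h
      simp at h
    have hm := csInf_mem hne
    rw [h] at hm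
    obtain ⟨k, hk, hkn⟩ := hm
    have : k = n := by exact_mod_cast hkn
    subst this
    refine ⟨hk, fun i hi his => ?_⟩
    have h2 : sInf ((↑) '' {n : ℕ | ω n ∈ S} : Set ℕ∞) ≤ (i : ℕ∞) := sInf_le ⟨i, his, rfl⟩
    rw [h] at h2
    have : k ≤ i := by exact_mod_cast h2
    omega
  · rintro ⟨h1, h2⟩
    apply le_antisymm
    · exact sInf_le ⟨n, h1, rfl⟩
    · apply le_sInf
      rintro _ ⟨k, hk, rfl⟩
      have : n ≤ k := by
        by_contra hc
        exact h2 k (by omega) hk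
      exact_mod_cast this

theorem lt_hitPlus {G : Type*} (S : Set G) (ω : ℕ → G) (n : ℕ) :
    (n : ℕ∞) < hitPlus S ω ↔ ∀ i, 1 ≤ i → i ≤ n → ω i ∉ S := by
  unfold hitPlus
  constructor
  · intro h i h1 h2 h3
    have h4 : sInf ((↑) '' {n : ℕ | 1 ≤ n ∧ ω n ∈ S} : Set ℕ∞) ≤ (i : ℕ∞) :=
      sInf_le ⟨i, ⟨h1, h3⟩, rfl⟩
    have h5 := lt_of_lt_of_le h h4
    have : n < i := by exact_mod_cast h5
    omega
  · intro h
    have h1 : ((n + 1 : ℕ) : ℕ∞) ≤ sInf ((↑) '' {n : ℕ | 1 ≤ n ∧ ω n ∈ S} : Set ℕ∞) := by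
      apply le_sInf
      rintro _ ⟨k, ⟨hk1, hk⟩, rfl⟩
      have : n + 1 ≤ k := by
        by_contra hc
        exact h k hk1 (by omega) hk
      exact_mod_cast this
    refine lt_of_lt_of_le ?_ h1
    exact_mod_cast Nat.lt_succ_self n

/-- Paths from `a` to `b` in `m + 1` steps whose interior avoids `T`. -/
def bridge {G : Type*} (T : Set G) (m : ℕ) (a b : G) : Set (ℕ → G) :=
  {ω | ω 0 = a ∧ ω (m + 1) = b ∧ ∀ i, 0 < i → i < m + 1 → ω i ∉ T}

/-- Finite version of `bridge`. -/
def fbridge {G : Type*} (T : Set G) (m : ℕ) (a b : G) : Set (Fin (m + 2) → G) :=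
  {p | p 0 = a ∧ p (Fin.last _) = b ∧ ∀ i, i ≠ 0 → i ≠ Fin.last _ → p i ∉ T}

theorem cyl {G : Type*} [Fintype G] [DecidableEq G] [MeasurableSpace G]
    (P : Matrix G G ℝ) (μ : G → Measure (ℕ → G)) (hμ : IsMarkovChain P μ) (n : ℕ)
    (p : Fin (n + 1) → G) :
    μ (p 0) {ω | ∀ i : Fin (n + 1), ω i = p i} =
      ENNReal.ofReal (∏ i : Fin n, P (p i.castSucc) (p i.succ)) := by
  have h := hμ.2 (p 0) n (fun i => p (Fin.ofNat (n + 1) i))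
  have e : {ω : ℕ → G | ∀ i ≤ n, ω i = p (Fin.ofNat (n + 1) i)}
      = {ω | ∀ i : Fin (n + 1), ω i = p i} := by
    ext ω
    constructor
    · intro h i
      have := h i (by omega)
      simpa using this
    · intro h i hi
      have := h (Fin.ofNat (n + 1) i)
      simpa [Fin.val_ofNat, Nat.mod_eq_of_lt (Nat.lt_succ_of_le hi)] using this
  rw [e] at h
  rw [h, Finset.prod_range]
  have h0 : Fin.ofNat (n + 1) 0 = 0 := rfl
  simp only [h0, if_true, one_mul]
  congr 1
  refine Finset.prod_congr rfl fun i _ => ?_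
  congr 2
  · ext; simp [Fin.val_ofNat, Nat.mod_eq_of_lt (show i.val < n + 1 by omega)]
  · ext; simp [Fin.val_ofNat]

theorem measurableSet_coord {G : Type*} [MeasurableSpace G]
    [MeasurableSingletonClass G] (i : ℕ) (c : G) : MeasurableSet {ω : ℕ → G | ω i = c} := by
  have h : Measurable (fun ω : ℕ → G => ω i) := measurable_pi_apply i
  have e : {ω : ℕ → G | ω i = c} = (fun ω : ℕ → G => ω i) ⁻¹' {c} := by ext ω; simp
  rw [e]
  exact h (measurableSet_singleton c)

theorem measure_bridge {G : Type*} [Fintype G] [DecidableEq G] [MeasurableSpace G]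
    [MeasurableSingletonClass G]
    (P : Matrix G G ℝ) (μ : G → Measure (ℕ → G)) (hμ : IsMarkovChain P μ)
    (T : Set G) (m : ℕ) (a b : G) :
    μ a (bridge T m a b) = ∑ p ∈ (fbridge T m a b).toFinite.toFinset,
      ENNReal.ofReal (∏ i : Fin (m + 1), P (p i.castSucc) (p i.succ)) := by
  have e : bridge T m a b = ⋃ p ∈ (fbridge T m a b).toFinite.toFinset,
      {ω : ℕ → G | ∀ i : Fin (m + 2), ω i = p i} := by
    ext ω
    simp only [Set.mem_iUnion, Set.Finite.mem_toFinset, Set.mem_setOf_eq, exists_prop]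
    constructor
    · rintro ⟨h0, h1, h2⟩
      refine ⟨fun i => ω i, ⟨h0, h1, fun i hi hl => h2 i ?_ ?_⟩, fun i => rfl⟩
      · exact Nat.pos_of_ne_zero (fun h => hi (Fin.ext h))
      · have : i.val ≠ m + 1 := fun h => hl (Fin.ext h)
        omega
    · rintro ⟨p, ⟨h0, h1, h2⟩, h⟩
      refine ⟨(h 0).trans h0, (h (Fin.last _)).trans h1, fun i hi hl => ?_⟩
      have := h ⟨i, by omega⟩
      simp only at this
      rw [this]
      apply h2
      · intro hc
        have := congrArg Fin.val hc
        simp at this; omega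
      · intro hc
        have := congrArg Fin.val hc
        simp at this; omega
  rw [e, measure_biUnion_finset]
  · refine Finset.sum_congr rfl fun p hp => ?_
    have h0 : p 0 = a := ((Set.Finite.mem_toFinset _).1 hp).1
    rw [← h0]
    exact cyl P μ hμ (m + 1) p
  · intro p _ q _ hpq
    rw [Function.onFun, Set.disjoint_left]
    intro ω h1 h2
    exact hpq (funext fun i => (h1 i).symm.trans (h2 i))
  · intro p _
    rw [Set.setOf_forall]
    refine MeasurableSet.iInter fun i => ?_
    exact measurableSet_coord i (p i)

theorem rev_prod {G : Type*} [Fintype G] [DecidableEq G]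
    (P : Matrix G G ℝ) (pi : G → ℝ) (hrev : IsReversible P pi) (n : ℕ) (p : Fin (n + 1) → G) :
    pi (p 0) * ∏ i : Fin n, P (p i.castSucc) (p i.succ) =
      pi (p (Fin.last n)) * ∏ i : Fin n, P (p i.succ) (p i.castSucc) := by
  induction n with
  | zero => simp
  | succ n ih =>
    have h := ih (fun i => p i.castSucc)
    rw [Fin.prod_univ_castSucc, Fin.prod_univ_castSucc]
    have h2 := hrev.2.2 (p (Fin.last n).castSucc) (p (Fin.last n).succ)
    simp only [Fin.succ_castSucc, Fin.succ_last, Fin.castSucc_zero] at h h2 ⊢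
    rw [← mul_assoc, h]
    linear_combination (∏ i : Fin n, P (p i.succ.castSucc) (p i.castSucc.castSucc)) * h2

theorem bridge_rev {G : Type*} [Fintype G] [DecidableEq G] [MeasurableSpace G]
    [MeasurableSingletonClass G]
    (P : Matrix G G ℝ) (pi : G → ℝ) (μ : G → Measure (ℕ → G)) (hrev : IsReversible P pi)
    (hμ : IsMarkovChain P μ) (T : Set G) (m : ℕ) (a b : G) :
    ENNReal.ofReal (pi a) * μ a (bridge T m a b) =
      ENNReal.ofReal (pi b) * μ b (bridge T m b a) := by
  rw [measure_bridge P μ hμ, measure_bridge P μ hμ, Finset.mul_sum, Finset.mul_sum]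
  have key : ∀ (a b : G) (p : Fin (m + 2) → G), p ∈ fbridge T m a b →
      p ∘ Fin.rev ∈ fbridge T m b a := by
    rintro a b p ⟨h0, h1, h2⟩
    refine ⟨by simpa using h1, by simpa using h0, fun i hi hl => h2 _ ?_ ?_⟩
    · intro hc
      apply hl
      rw [← Fin.rev_rev i, hc, Fin.rev_zero]
    · intro hc
      apply hi
      rw [← Fin.rev_rev i, hc, Fin.rev_last]
  refine Finset.sum_bij' (fun p _ => p ∘ Fin.rev) (fun p _ => p ∘ Fin.rev) ?_ ?_ ?_ ?_ ?_
  · intro p hp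
    simp only [Set.Finite.mem_toFinset] at hp ⊢
    exact key _ _ p hp
  · intro p hp
    simp only [Set.Finite.mem_toFinset] at hp ⊢
    exact key _ _ p hp
  · intro p _; funext i; simp
  · intro p _; funext i; simp
  · intro p hp
    simp only [Set.Finite.mem_toFinset] at hp
    obtain ⟨h0, h1, -⟩ := hp
    rw [← ENNReal.ofReal_mul (hrev.1 a).le, ← ENNReal.ofReal_mul (hrev.1 b).le]
    congr 1
    have h := rev_prod P pi hrev (m + 1) p
    rw [h0, h1] at h
    rw [h]
    congr 1
    rw [← Equiv.prod_comp Fin.revPerm]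
    refine Finset.prod_congr rfl fun i _ => ?_
    simp [Fin.rev_castSucc, Fin.rev_succ]

theorem measurableSet_bridge {G : Type*} [Fintype G] [MeasurableSpace G]
    [MeasurableSingletonClass G] (T : Set G) (m : ℕ) (a b : G) :
    MeasurableSet (bridge T m a b) := by
  have e : bridge T m a b = ((fun ω : ℕ → G => ω 0) ⁻¹' {a}) ∩
      (((fun ω : ℕ → G => ω (m + 1)) ⁻¹' {b}) ∩
        ⋂ i : ℕ, ⋂ _ : 0 < i, ⋂ _ : i < m + 1, (fun ω : ℕ → G => ω i) ⁻¹' Tᶜ) := by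
    ext ω; simp [bridge]
  rw [e]
  refine (measurable_pi_apply 0 (measurableSet_singleton a)).inter
    ((measurable_pi_apply (m + 1) (measurableSet_singleton b)).inter ?_)
  refine MeasurableSet.iInter fun i => MeasurableSet.iInter fun _ => MeasurableSet.iInter fun _ => ?_
  exact measurable_pi_apply i (Set.toFinite _).measurableSet

theorem measure_start {G : Type*} [Fintype G] [DecidableEq G] [MeasurableSpace G]
    [MeasurableSingletonClass G]
    (P : Matrix G G ℝ) (μ : G → Measure (ℕ → G)) (hμ : IsMarkovChain P μ)
    (T : Set G) (a b : G) (hb : b ∈ T) (E : Set (ℕ → G))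
    (hE : ∀ ω : ℕ → G, ω 0 = a → (ω ∈ E ↔ ∃ m, ω ∈ bridge T m a b)) :
    μ a E = ∑' m, μ a (bridge T m a b) := by
  have := hμ.1 a
  have h1 : μ a {ω | ω 0 = a} = 1 := by
    have h := hμ.2 a 0 (fun _ => a)
    simpa using h
  have hae : ∀ᵐ ω ∂ μ a, ω 0 = a := by
    rw [← prob_compl_eq_zero_iff (measurableSet_coord 0 a)] at h1
    exact h1
  rw [← measure_iUnion]
  · apply measure_congr
    filter_upwards [hae] with ω hω
    refine propext ((hE ω hω).trans ?_)
    exact Set.mem_iUnion.symm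
  · intro m k hmk
    rw [Function.onFun, Set.disjoint_left]
    rintro ω ⟨-, h1, h2⟩ ⟨-, h3, h4⟩
    rcases lt_or_gt_of_ne hmk with h | h
    · exact h4 (m + 1) (by omega) (by omega) (h1 ▸ hb)
    · exact h2 (k + 1) (by omega) (by omega) (h3 ▸ hb)
  · exact fun m => measurableSet_bridge T m a b

/-- Path-reversal identity: for `x ∈ S` and `y ∉ S`,
`π(y)·Pr_y[X_{T_S} = x, T_S < T_y^+] = π(x)·Pr_x[T_y < T_S^+]`. -/
theorem stmt3 {G : Type*} [Fintype G] [DecidableEq G] [MeasurableSpace G] [MeasurableSingletonClass G]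
    (P : Matrix G G ℝ) (pi : G → ℝ) (μ : G → Measure (ℕ → G))
    (hP : IsStochastic P) (hirr : IsIrreducible P) (hap : IsAperiodic P)
    (hrev : IsReversible P pi) (hμ : IsMarkovChain P μ)
    (S : Set G) (hS : S.Nonempty) (x : G) (hx : x ∈ S) (y : G) (hy : y ∉ S) :
    pi y * (μ y {ω | ∃ n : ℕ, hit S ω = (n : ℕ∞) ∧ ω n = x ∧
        (n : ℕ∞) < hitPlus {y} ω}).toReal
      = pi x * (μ x {ω | hit {y} ω < hitPlus S ω}).toReal := by
  have hxy : x ≠ y := fun h => hy (h ▸ hx)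
  have hl : μ y {ω | ∃ n : ℕ, hit S ω = (n : ℕ∞) ∧ ω n = x ∧ (n : ℕ∞) < hitPlus {y} ω}
      = ∑' m, μ y (bridge (S ∪ {y}) m y x) := by
    refine measure_start P μ hμ (S ∪ {y}) y x (Or.inl hx) _ fun ω h0 => ?_
    simp only [Set.mem_setOf_eq, hit_eq_coe, lt_hitPlus, bridge, Set.mem_union,
      Set.mem_singleton_iff]
    constructor
    · rintro ⟨n, ⟨h1, h2⟩, h3, h4⟩
      cases n with
      | zero => exact absurd (h3.symm.trans h0) hxy
      | succ m =>
        refine ⟨m, h0, h3, fun i hi hl hc => ?_⟩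
        rcases hc with hc | hc
        · exact h2 i hl hc
        · exact h4 i hi (by omega) hc
    · rintro ⟨m, -, h1, h2⟩
      refine ⟨m + 1, ⟨h1 ▸ hx, fun i hi hc => ?_⟩, h1, fun i hi hl hc => ?_⟩
      · rcases Nat.eq_zero_or_pos i with rfl | hp
        · exact hy (h0 ▸ hc)
        · exact h2 i hp hi (Or.inl hc)
      · rcases Nat.lt_or_ge i (m + 1) with hp | hp
        · exact h2 i hi hp (Or.inr hc)
        · have : i = m + 1 := by omega
          subst this
          exact hxy (h1.symm.trans hc)
  have hr : μ x {ω | hit {y} ω < hitPlus S ω} = ∑' m, μ x (bridge (S ∪ {y}) m x y) := by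
    refine measure_start P μ hμ (S ∪ {y}) x y (Or.inr rfl) _ fun ω h0 => ?_
    have e : hit {y} ω < hitPlus S ω ↔
        ∃ n : ℕ, hit {y} ω = (n : ℕ∞) ∧ (n : ℕ∞) < hitPlus S ω := by
      constructor
      · intro h
        obtain ⟨n, hn⟩ := ENat.ne_top_iff_exists.1 (ne_top_of_lt h)
        exact ⟨n, hn.symm, hn ▸ h⟩
      · rintro ⟨n, h1, h2⟩
        rw [h1]; exact h2
    rw [Set.mem_setOf_eq, e]
    simp only [Set.mem_setOf_eq, hit_eq_coe, lt_hitPlus, bridge, Set.mem_union,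
      Set.mem_singleton_iff]
    constructor
    · rintro ⟨n, ⟨h1, h2⟩, h4⟩
      cases n with
      | zero => exact absurd (h0.symm.trans h1) hxy
      | succ m =>
        refine ⟨m, h0, h1, fun i hi hl hc => ?_⟩
        rcases hc with hc | hc
        · exact h4 i hi (by omega) hc
        · exact h2 i hl hc
    · rintro ⟨m, -, h1, h2⟩
      refine ⟨m + 1, ⟨h1, fun i hi hc => ?_⟩, fun i hi hl hc => ?_⟩
      · rcases Nat.eq_zero_or_pos i with rfl | hp
        · exact hxy (h0.symm.trans hc)
        · exact h2 i hp hi (Or.inr hc)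
      · rcases Nat.lt_or_ge i (m + 1) with hp | hp
        · exact h2 i hi hp (Or.inl hc)
        · have : i = m + 1 := by omega
          subst this
          exact hy (h1 ▸ hc)
  have main : ENNReal.ofReal (pi y) * μ y {ω | ∃ n : ℕ, hit S ω = (n : ℕ∞) ∧ ω n = x ∧
        (n : ℕ∞) < hitPlus {y} ω} = ENNReal.ofReal (pi x) * μ x {ω | hit {y} ω < hitPlus S ω} := by
    rw [hl, hr, ← ENNReal.tsum_mul_left, ← ENNReal.tsum_mul_left]
    exact tsum_congr fun m => bridge_rev P pi μ hrev hμ _ m y x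
  have h := congrArg ENNReal.toReal main
  rwa [ENNReal.toReal_mul, ENNReal.toReal_mul, ENNReal.toReal_ofReal (hrev.1 y).le,
    ENNReal.toReal_ofReal (hrev.1 x).le] at h


end HM
end

section
/- For any nonempty set S ⊆ G, any x ∈ S and any y ∈ G, the harmonic measure satisfies π(y)·h_{y,S}(x) = π(x)·Pr_x[T_y < T_S^+] / Pr_y[T_S < T_y^+]. -/
open MeasureTheory Finset
open scoped ENNReal

namespace HM

variable {G : Type*} [Fintype G] [DecidableEq G]

variable [MeasurableSpace G]

section helpers

variable {G : Type*} [Fintype G] [DecidableEq G]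

/-- shift of a path -/
def shf (ω : ℕ → G) : ℕ → G := fun n => ω (n + 1)

/-- first visit to `A` (times `≥ 0`) happens in `B` -/
def evF (A B : Set G) : Set (ℕ → G) := {ω | ∃ n, ω n ∈ B ∧ ∀ i < n, ω i ∉ A}

/-- first visit to `A` (times `≥ 1`) happens in `B` -/
def evE (A B : Set G) : Set (ℕ → G) := {ω | ∃ n, ω (n + 1) ∈ B ∧ ∀ i < n, ω (i + 1) ∉ A}

/-- at time `n+1` the chain is at `b`, no visit to `A` in `1..n` -/
def evN (A : Set G) (b : G) (n : ℕ) : Set (ℕ → G) :=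
  {ω | ω (n + 1) = b ∧ ∀ i < n, ω (i + 1) ∉ A}

open Classical in
/-- taboo probabilities -/
noncomputable def fN (P : Matrix G G ℝ) (A : Set G) : ℕ → G → G → ℝ
  | 0 => fun a b => P a b
  | n + 1 => fun a b => ∑ c, P a c * (if c ∈ A then 0 else fN P A n c b)

open Classical in
theorem fN_back (P : Matrix G G ℝ) (A : Set G) (n : ℕ) (a b : G) :
    fN P A (n + 1) a b = ∑ c, (if c ∈ A then 0 else fN P A n a c) * P c b := by
  induction n generalizing a b with
  | zero =>
    simp only [fN]
    refine Finset.sum_congr rfl fun c _ => ?_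
    split_ifs <;> simp
  | succ n ih =>
    conv_lhs =>
      rw [fN]
      simp only [ih]
    conv_rhs => simp only [fN]
    have h1 : ∀ c, P a c * (if c ∈ A then 0 else ∑ e, (if e ∈ A then 0 else fN P A n c e) * P e b)
        = ∑ e, P a c * (if c ∈ A then 0 else (if e ∈ A then 0 else fN P A n c e)) * P e b := by
      intro c
      split_ifs
      · simp
      · rw [Finset.mul_sum]; simp [mul_assoc]
    simp only [h1]
    rw [Finset.sum_comm]
    refine Finset.sum_congr rfl fun e _ => ?_
    by_cases he : e ∈ A
    · simp [he]
    · simp only [he, if_false]; rw [Finset.sum_mul]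

theorem fN_rev (P : Matrix G G ℝ) (pi : G → ℝ) (hrev : IsReversible P pi) (A : Set G) (n : ℕ)
    (a b : G) : pi a * fN P A n a b = pi b * fN P A n b a := by
  classical
  induction n generalizing a b with
  | zero => exact hrev.2.2 a b
  | succ n ih =>
    rw [fN_back P A n b a, fN, Finset.mul_sum, Finset.mul_sum]
    refine Finset.sum_congr rfl fun c _ => ?_
    by_cases hc : c ∈ A
    · simp [hc]
    · simp only [hc, if_false]
      have h1 := hrev.2.2 a c
      have h2 := ih c b
      linear_combination fN P A n c b * h1 + P c a * h2

theorem fN_nonneg (P : Matrix G G ℝ) (hP : IsStochastic P) (A : Set G) (n : ℕ) (a b : G) :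
    0 ≤ fN P A n a b := by
  classical
  induction n generalizing a b with
  | zero => exact hP.1 a b
  | succ n ih =>
    rw [fN]
    refine Finset.sum_nonneg fun c _ => mul_nonneg (hP.1 _ _) ?_
    split_ifs
    · exact le_rfl
    · exact ih _ _

open Classical in
/-- uniqueness -/
theorem uniq (P : Matrix G G ℝ) (pi : G → ℝ) (hP : IsStochastic P) (hirr : IsIrreducible P)
    (hrev : IsReversible P pi) (A : Set G) (hA : A.Nonempty) (d : G → ℝ)
    (hd : ∀ a, d a = ∑ c, P a c * (if c ∈ A then 0 else d c)) : ∀ a, d a = 0 := by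
  obtain ⟨a0, ha0⟩ := hA
  have : Nonempty G := ⟨a0⟩
  obtain ⟨m, hm⟩ := Finite.exists_max (fun a => |d a|)
  by_contra! hne
  obtain ⟨z, hz⟩ := hne
  have hM : 0 < |d m| := lt_of_lt_of_le (abs_pos.mpr hz) (hm z)
  have key : ∀ a, |d a| = |d m| → ∀ c, 0 < P a c → |d c| = |d m| ∧ c ∉ A := by
    intro a ha c hc
    have h1 : |d a| ≤ ∑ c, P a c * (if c ∈ A then 0 else |d c|) := by
      conv_lhs => rw [hd a]
      refine (Finset.abs_sum_le_sum_abs _ _).trans (le_of_eq ?_)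
      refine Finset.sum_congr rfl fun c _ => ?_
      rw [abs_mul, abs_of_nonneg (hP.1 a c)]
      split_ifs <;> simp
    have h2 : ∀ c ∈ Finset.univ, 0 ≤ P a c * (|d m| - (if c ∈ A then 0 else |d c|)) := by
      intro c _
      refine mul_nonneg (hP.1 _ _) ?_
      split_ifs
      · linarith
      · linarith [hm c]
    have h3 : ∑ c, P a c * (|d m| - (if c ∈ A then 0 else |d c|)) = 0 := by
      refine le_antisymm ?_ (Finset.sum_nonneg h2)
      simp only [mul_sub]
      rw [Finset.sum_sub_distrib, ← Finset.sum_mul, hP.2 a]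
      linarith
    have h4 := (Finset.sum_eq_zero_iff_of_nonneg h2).1 h3 c (Finset.mem_univ _)
    rcases mul_eq_zero.1 h4 with h | h
    · linarith
    · split_ifs at h with hcA
      · linarith
      · exact ⟨by linarith, hcA⟩
  have reach : ∀ t : ℕ, ∀ a c, 0 < (P ^ t) a c → |d a| = |d m| → |d c| = |d m| := by
    intro t
    induction t with
    | zero =>
      intro a c h ha
      rw [pow_zero, Matrix.one_apply] at h
      split_ifs at h with hac
      · rw [← hac]; exact ha
      · exact absurd h (lt_irrefl _)
    | succ t ih =>
      intro a c h ha
      rw [pow_succ', Matrix.mul_apply] at h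
      obtain ⟨e, _, he⟩ := Finset.exists_ne_zero_of_sum_ne_zero h.ne'
      have hpe : 0 < P a e := lt_of_le_of_ne (hP.1 _ _) (Ne.symm (left_ne_zero_of_mul he))
      have hnn : ∀ t : ℕ, ∀ a c, 0 ≤ (P ^ t) a c := by
        intro t
        induction t with
        | zero => intro a c; rw [pow_zero, Matrix.one_apply]; split_ifs <;> norm_num
        | succ t ih =>
          intro a c
          rw [pow_succ', Matrix.mul_apply]
          exact Finset.sum_nonneg fun e _ => mul_nonneg (hP.1 _ _) (ih _ _)
      exact ih e c (lt_of_le_of_ne (hnn _ _ _) (Ne.symm (right_ne_zero_of_mul he)))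
        (key a ha e hpe).1
  have hall : ∀ a, |d a| = |d m| := fun a => by
    obtain ⟨t, ht⟩ := hirr m a
    exact reach t m a ht rfl
  have hcol : ∀ a, P a a0 = 0 := fun a => by
    by_contra h
    exact (key a (hall a) a0 (lt_of_le_of_ne (hP.1 _ _) (Ne.symm h))).2 ha0
  have hrow : ∀ c, P a0 c = 0 := fun c => by
    have := hrev.2.2 a0 c
    rw [hcol c, mul_zero] at this
    exact (mul_eq_zero.1 this).resolve_left (hrev.1 a0).ne'
  have := hP.2 a0
  simp [hrow] at this

theorem evE_eq (A B : Set G) : evE A B = shf ⁻¹' evF A B := rfl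

variable [MeasurableSpace G] [MeasurableSingletonClass G]

theorem meas_shf : Measurable (shf : (ℕ → G) → (ℕ → G)) :=
  measurable_pi_lambda _ fun n => measurable_pi_apply (n + 1)

theorem meas_at (n : ℕ) (B : Set G) : MeasurableSet {ω : ℕ → G | ω n ∈ B} :=
  (measurable_pi_apply n) (Set.toFinite B).measurableSet

theorem meas_F (A B : Set G) : MeasurableSet (evF A B) := by
  have : evF A B = ⋃ n, ({ω : ℕ → G | ω n ∈ B} ∩ ⋂ i, ⋂ (_ : i < n), {ω : ℕ → G | ω i ∈ Aᶜ}) := by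
    ext ω; simp [evF]
  rw [this]
  exact MeasurableSet.iUnion fun n => (meas_at n B).inter
    (MeasurableSet.iInter fun i => MeasurableSet.iInter fun _ => meas_at i _)

theorem meas_E (A B : Set G) : MeasurableSet (evE A B) := meas_shf (meas_F A B)

theorem meas_N (A : Set G) (b : G) (n : ℕ) : MeasurableSet (evN A b n) := by
  have : evN A b n = ({ω : ℕ → G | ω (n + 1) ∈ ({b} : Set G)} ∩
      ⋂ i, ⋂ (_ : i < n), {ω : ℕ → G | ω (i + 1) ∈ Aᶜ}) := by
    ext ω; simp [evN]
  rw [this]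
  exact (meas_at _ _).inter
    (MeasurableSet.iInter fun i => MeasurableSet.iInter fun _ => meas_at _ _)

/-- the cylinder sets -/
def cyl_s4 : Set (Set (ℕ → G)) := {s | ∃ (t : ℕ) (w : ℕ → G), s = {ω | ∀ i ≤ t, ω i = w i}}

theorem cyl_meas (t : ℕ) (w : ℕ → G) : MeasurableSet {ω : ℕ → G | ∀ i ≤ t, ω i = w i} := by
  have : {ω : ℕ → G | ∀ i ≤ t, ω i = w i} =
      ⋂ i, ⋂ (_ : i ≤ t), {ω : ℕ → G | ω i ∈ ({w i} : Set G)} := by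
    ext ω; simp
  rw [this]
  exact MeasurableSet.iInter fun i => MeasurableSet.iInter fun _ => meas_at _ _

theorem cyl_gen : (MeasurableSpace.pi : MeasurableSpace (ℕ → G)) =
    MeasurableSpace.generateFrom cyl_s4 := by
  classical
  apply le_antisymm
  · refine iSup_le fun n => ?_
    rintro _ ⟨B, hB, rfl⟩
    have : (fun ω : ℕ → G => ω n) ⁻¹' B = ⋃ v : Fin (n + 1) → G, ⋃ (_ : v (Fin.last n) ∈ B),
        {ω : ℕ → G | ∀ i ≤ n, ω i = (fun j : ℕ => v (Fin.ofNat (n + 1) j)) i} := by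
      ext ω
      simp only [Set.mem_preimage, Set.mem_iUnion, Set.mem_setOf_eq, exists_prop]
      constructor
      · intro h
        refine ⟨fun i => ω i, by simpa using h, fun i hi => ?_⟩
        simp [Fin.ofNat, Nat.mod_eq_of_lt (Nat.lt_succ_of_le hi)]
      · rintro ⟨v, hv, h⟩
        rw [h n le_rfl]
        convert hv using 2
        ext; simp [Fin.ofNat]
    rw [this]
    refine MeasurableSet.iUnion fun v => MeasurableSet.iUnion fun _ => ?_
    exact MeasurableSpace.measurableSet_generateFrom ⟨n, _, rfl⟩
  · refine MeasurableSpace.generateFrom_le ?_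
    rintro _ ⟨t, w, rfl⟩
    exact cyl_meas t w

theorem cyl_pi : IsPiSystem (cyl_s4 : Set (Set (ℕ → G))) := by
  rintro _ ⟨t, w, rfl⟩ _ ⟨t', w', rfl⟩ ⟨ω, h1, h2⟩
  refine ⟨max t t', ω, ?_⟩
  ext ω'
  simp only [Set.mem_inter_iff, Set.mem_setOf_eq]
  simp only [Set.mem_setOf_eq] at h1 h2
  constructor
  · rintro ⟨h3, h4⟩ i hi
    rcases le_max_iff.1 hi with h | h
    · rw [h3 i h, h1 i h]
    · rw [h4 i h, h2 i h]
  · intro h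
    exact ⟨fun i hi => by rw [h i (hi.trans (le_max_left _ _)), h1 i hi],
      fun i hi => by rw [h i (hi.trans (le_max_right _ _)), h2 i hi]⟩

theorem start_ae (P : Matrix G G ℝ) (μ : G → Measure (ℕ → G)) (hμ : IsMarkovChain P μ) (a : G) :
    ∀ᵐ ω ∂ μ a, ω 0 = a := by
  have := hμ.1 a
  have h := hμ.2 a 0 (fun _ => a)
  simp only [nonpos_iff_eq_zero, forall_eq, if_true, Finset.range_zero, Finset.prod_empty,
    mul_one, ENNReal.ofReal_one] at h
  have hm : MeasurableSet {ω : ℕ → G | ω 0 = a} := meas_at 0 {a}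
  rw [ae_iff]
  have := (prob_compl_eq_zero_iff hm).2 h
  exact this

theorem markov (P : Matrix G G ℝ) (hP : IsStochastic P) (μ : G → Measure (ℕ → G))
    (hμ : IsMarkovChain P μ) (a : G) (E : Set (ℕ → G)) (hE : MeasurableSet E) :
    μ a (shf ⁻¹' E) = ∑ c, ENNReal.ofReal (P a c) * μ c E := by
  have := hμ.1
  have hmap : ∀ s, MeasurableSet s → (μ a).map shf s = μ a (shf ⁻¹' s) :=
    fun s hs => Measure.map_apply meas_shf hs
  have : IsProbabilityMeasure ((μ a).map shf) :=
    Measure.isProbabilityMeasure_map meas_shf.aemeasurable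
  have hsum : ∀ s, (∑ c, ENNReal.ofReal (P a c) • μ c) s = ∑ c, ENNReal.ofReal (P a c) * μ c s := by
    intro s
    rw [Measure.finsetSum_apply]
    simp
  have heq : (μ a).map shf = ∑ c, ENNReal.ofReal (P a c) • μ c := by
    refine ext_of_generate_finite cyl_s4 cyl_gen cyl_pi ?_ ?_
    · rintro _ ⟨t, w, rfl⟩
      rw [hmap _ (cyl_meas t w), hsum]
      have h1 : μ a (shf ⁻¹' {ω | ∀ i ≤ t, ω i = w i}) =
          μ a {ω | ∀ i ≤ t + 1, ω i = (fun j : ℕ => Nat.casesOn j a w : ℕ → G) i} := by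
        refine measure_congr ?_
        filter_upwards [start_ae P μ hμ a] with ω h0
        refine propext ⟨fun h i hi => ?_, fun h i hi => ?_⟩
        · cases i with
          | zero => exact h0
          | succ i => exact h i (by omega)
        · exact h (i + 1) (by omega)
      rw [h1, hμ.2, Finset.prod_range_succ']
      rw [Finset.sum_eq_single (w 0)]
      · rw [hμ.2, ← ENNReal.ofReal_mul (hP.1 _ _)]
        congr 1
        simp [mul_comm]
      · intro c _ hc
        rw [hμ.2]
        simp [Ne.symm hc]
      · simp
    · rw [hsum, measure_univ]
      simp only [measure_univ, mul_one]
      rw [← ENNReal.ofReal_sum_of_nonneg fun c _ => hP.1 a c, hP.2 a, ENNReal.ofReal_one]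
  rw [← hmap E hE, heq, hsum]

theorem markov_real (P : Matrix G G ℝ) (hP : IsStochastic P) (μ : G → Measure (ℕ → G))
    (hμ : IsMarkovChain P μ) (a : G) (E : Set (ℕ → G)) (hE : MeasurableSet E) :
    (μ a (shf ⁻¹' E)).toReal = ∑ c, P a c * (μ c E).toReal := by
  have := hμ.1
  rw [markov P hP μ hμ a E hE, ENNReal.toReal_sum]
  · refine Finset.sum_congr rfl fun c _ => ?_
    rw [ENNReal.toReal_mul, ENNReal.toReal_ofReal (hP.1 _ _)]
  · intro c _
    exact ENNReal.mul_ne_top ENNReal.ofReal_ne_top (measure_ne_top _ _)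

open Classical in
theorem F_val (P : Matrix G G ℝ) (μ : G → Measure (ℕ → G))
    (hμ : IsMarkovChain P μ) (A B : Set G) (hBA : B ⊆ A) (c : G) :
    (μ c (evF A B)).toReal = if c ∈ B then 1 else if c ∈ A then 0 else (μ c (evE A B)).toReal := by
  have := hμ.1
  split_ifs with h1 h2
  · have : μ c (evF A B) = μ c Set.univ := by
      refine measure_congr ?_
      filter_upwards [start_ae P μ hμ c] with ω h0
      refine propext ⟨fun _ => trivial, fun _ => ⟨0, by rwa [h0], by simp⟩⟩
    rw [this]; simp
  · have : μ c (evF A B) = μ c ∅ := by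
      refine measure_congr ?_
      filter_upwards [start_ae P μ hμ c] with ω h0
      refine propext ⟨?_, fun h => h.elim⟩
      rintro ⟨n, hn, h⟩
      cases n with
      | zero => exact h1 (by rwa [h0] at hn)
      | succ n => exact h 0 (by omega) (by rwa [h0])
    rw [this]; simp
  · congr 1
    refine measure_congr ?_
    filter_upwards [start_ae P μ hμ c] with ω h0
    refine propext ⟨?_, ?_⟩
    · rintro ⟨n, hn, h⟩
      cases n with
      | zero => exact (h1 (by rwa [h0] at hn)).elim
      | succ n => exact ⟨n, hn, fun i hi => h (i + 1) (by omega)⟩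
    · rintro ⟨n, hn, h⟩
      refine ⟨n + 1, hn, fun i hi => ?_⟩
      cases i with
      | zero => rwa [h0]
      | succ i => exact h i (by omega)

open Classical in
theorem E_rec (P : Matrix G G ℝ) (hP : IsStochastic P) (μ : G → Measure (ℕ → G))
    (hμ : IsMarkovChain P μ) (A B : Set G) (hBA : B ⊆ A) (a : G) :
    (μ a (evE A B)).toReal =
      ∑ c, P a c * (if c ∈ B then 1 else if c ∈ A then 0 else (μ c (evE A B)).toReal) := by
  rw [evE_eq, markov_real P hP μ hμ a _ (meas_F A B)]
  refine Finset.sum_congr rfl fun c _ => ?_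
  rw [F_val P μ hμ A B hBA c, evE_eq]

theorem N_val (P : Matrix G G ℝ) (hP : IsStochastic P) (μ : G → Measure (ℕ → G))
    (hμ : IsMarkovChain P μ) (A : Set G) (b : G) (n : ℕ) (a : G) :
    (μ a (evN A b n)).toReal = fN P A n a b := by
  classical
  have := hμ.1
  induction n generalizing a with
  | zero =>
    have h : evN A b 0 = shf ⁻¹' {ω | ω 0 ∈ ({b} : Set G)} := by
      ext ω; simp [evN, shf]
    rw [h, markov_real P hP μ hμ a _ (meas_at _ _), fN, Finset.sum_eq_single b]
    · have : μ b {ω | ω 0 ∈ ({b} : Set G)} = μ b Set.univ := by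
        refine measure_congr ?_
        filter_upwards [start_ae P μ hμ b] with ω h0
        exact propext ⟨fun _ => trivial, fun _ => h0⟩
      rw [this]; simp
    · intro c _ hc
      have : μ c {ω | ω 0 ∈ ({b} : Set G)} = μ c ∅ := by
        refine measure_congr ?_
        filter_upwards [start_ae P μ hμ c] with ω h0
        exact propext ⟨fun h => hc (h0.symm.trans h), fun h => h.elim⟩
      rw [this]; simp
    · simp
  | succ n ih =>
    have h : evN A b (n + 1) = shf ⁻¹' ({ω | ω 0 ∈ Aᶜ} ∩ evN A b n) := by
      ext ω
      simp only [evN, shf, Set.mem_setOf_eq, Set.mem_preimage, Set.mem_inter_iff, Set.mem_compl_iff]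
      constructor
      · rintro ⟨h1, h2⟩
        exact ⟨h2 0 (by omega), h1, fun i hi => h2 (i + 1) (by omega)⟩
      · rintro ⟨h1, h2, h3⟩
        refine ⟨h2, fun i hi => ?_⟩
        cases i with
        | zero => exact h1
        | succ i => exact h3 i (by omega)
    rw [h, markov_real P hP μ hμ a _ ((meas_at _ _).inter (meas_N A b n)), fN]
    refine Finset.sum_congr rfl fun c _ => ?_
    congr 1
    split_ifs with hc
    · have : μ c ({ω | ω 0 ∈ Aᶜ} ∩ evN A b n) = μ c ∅ := by
        refine measure_congr ?_
        filter_upwards [start_ae P μ hμ c] with ω h0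
        refine propext ⟨fun h => h.1 (by rwa [h0]), fun h => h.elim⟩
      rw [this]; simp
    · rw [← ih c]
      congr 1
      refine measure_congr ?_
      filter_upwards [start_ae P μ hμ c] with ω h0
      refine propext ⟨fun h => h.2, fun h => ⟨?_, h⟩⟩
      show ω 0 ∉ A
      rwa [h0]

theorem E_tsum (P : Matrix G G ℝ) (hP : IsStochastic P) (μ : G → Measure (ℕ → G))
    (hμ : IsMarkovChain P μ) (A : Set G) (b : G) (hb : b ∈ A) (a : G) :
    (μ a (evE A {b})).toReal = ∑' n, fN P A n a b := by
  have := hμ.1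
  have h : evE A {b} = ⋃ n, evN A b n := by
    ext ω; simp [evE, evN]
  rw [h, measure_iUnion _ (fun n => meas_N A b n), ENNReal.tsum_toReal_eq]
  · simp only [N_val P hP μ hμ]
  · intro n; exact measure_ne_top _ _
  · have : ∀ m n, m < n → Disjoint (evN A b m) (evN A b n) := by
      intro m n hmn
      rw [Set.disjoint_left]
      rintro ω ⟨h1, _⟩ ⟨_, h4⟩
      exact h4 m hmn (by rwa [h1])
    intro m n hmn
    rcases lt_or_gt_of_ne hmn with h | h
    · exact this m n h
    · exact (this n m h).symm

theorem E_rev (P : Matrix G G ℝ) (hP : IsStochastic P) (pi : G → ℝ) (hrev : IsReversible P pi)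
    (μ : G → Measure (ℕ → G))
    (hμ : IsMarkovChain P μ) (A : Set G) (a b : G) (ha : a ∈ A) (hb : b ∈ A) :
    pi a * (μ a (evE A {b})).toReal = pi b * (μ b (evE A {a})).toReal := by
  rw [E_tsum P hP μ hμ A b hb a, E_tsum P hP μ hμ A a ha b, ← tsum_mul_left, ← tsum_mul_left]
  exact tsum_congr fun n => fN_rev P pi hrev A n a b

theorem lt_sInf_iff' (n : ℕ) (T : Set ℕ) :
    (n : ℕ∞) < sInf ((↑) '' T) ↔ ∀ m ∈ T, n < m := by
  constructor
  · intro h m hm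
    exact_mod_cast lt_of_lt_of_le h (sInf_le ⟨m, hm, rfl⟩)
  · intro h
    have h1 : ((n + 1 : ℕ) : ℕ∞) ≤ sInf ((↑) '' T) := by
      refine le_sInf ?_
      rintro _ ⟨m, hm, rfl⟩
      exact_mod_cast h m hm
    exact lt_of_lt_of_le (by exact_mod_cast Nat.lt_succ_self n) h1

theorem hit_lt (B C : Set G) (ω : ℕ → G) :
    hit B ω < hitPlus C ω ↔ ∃ n, ω n ∈ B ∧ ∀ i, 1 ≤ i → i ≤ n → ω i ∉ C := by
  rw [hit, sInf_lt_iff]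
  constructor
  · rintro ⟨_, ⟨n, hn, rfl⟩, h⟩
    rw [hitPlus, lt_sInf_iff'] at h
    exact ⟨n, hn, fun i hi hin hC => absurd (h i ⟨hi, hC⟩) (by omega)⟩
  · rintro ⟨n, hn, h⟩
    refine ⟨_, ⟨n, hn, rfl⟩, ?_⟩
    rw [hitPlus, lt_sInf_iff']
    rintro m ⟨hm, hC⟩
    by_contra hlt
    exact h m hm (by omega) hC

theorem hit_lt_E (B C : Set G) (hBC : Disjoint B C) (ω : ℕ → G) (h0 : ω 0 ∉ B) :
    hit B ω < hitPlus C ω ↔ ω ∈ evE (B ∪ C) B := by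
  classical
  rw [hit_lt]
  constructor
  · rintro ⟨n, hn, h⟩
    have hex : ∃ n, ω n ∈ B := ⟨n, hn⟩
    have hk := Nat.find_spec hex
    have hkn : Nat.find hex ≤ n := Nat.find_min' hex hn
    have hmin : ∀ i, i < Nat.find hex → ω i ∉ B := fun i hi => Nat.find_min hex hi
    generalize Nat.find hex = k at hk hkn hmin
    cases k with
    | zero => exact absurd hk h0
    | succ k =>
      refine ⟨k, hk, fun i hi => ?_⟩
      rintro (h1 | h1)
      · exact hmin (i + 1) (by omega) h1
      · exact h (i + 1) (by omega) (by omega) h1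
  · rintro ⟨n, hn, h⟩
    refine ⟨n + 1, hn, fun i hi hin hC => ?_⟩
    rcases Nat.lt_or_ge i (n + 1) with hlt | hge
    · obtain ⟨j, rfl⟩ : ∃ j, i = j + 1 := ⟨i - 1, by omega⟩
      exact h j (by omega) (Or.inr hC)
    · have : i = n + 1 := by omega
      subst this
      exact Set.disjoint_left.1 hBC hn hC

theorem hitsAt_F (S : Set G) (x : G) (hx : x ∈ S) : hitsAt S x = evF S {x} := by
  ext ω
  constructor
  · rintro ⟨n, hn, h⟩
    refine ⟨n, h, fun i hi hiS => ?_⟩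
    have : hit S ω ≤ (i : ℕ∞) := sInf_le ⟨i, hiS, rfl⟩
    rw [hn] at this
    have : n ≤ i := by exact_mod_cast this
    omega
  · rintro ⟨n, hn, h⟩
    have hnx : ω n = x := hn
    refine ⟨n, le_antisymm (sInf_le ⟨n, by simpa [hnx] using hx, rfl⟩) (le_sInf ?_), hn⟩
    rintro _ ⟨m, hm, rfl⟩
    by_contra hlt
    have : m < n := by exact_mod_cast not_le.1 hlt
    exact h m this hm

end helpers

/-- For `x ∈ S` and any `y ∈ G`,
`π(y)·h_{y,S}(x) = π(x)·Pr_x[T_y < T_S^+] / Pr_y[T_S < T_y^+]`. -/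
theorem stmt4 {G : Type*} [Fintype G] [DecidableEq G] [MeasurableSpace G] [MeasurableSingletonClass G]
    (P : Matrix G G ℝ) (pi : G → ℝ) (μ : G → Measure (ℕ → G))
    (hP : IsStochastic P) (hirr : IsIrreducible P) (hap : IsAperiodic P)
    (hrev : IsReversible P pi) (hμ : IsMarkovChain P μ)
    (S : Set G) (hS : S.Nonempty) (x : G) (hx : x ∈ S) (y : G) :
    pi y * harm μ S y x
      = pi x * (μ x {ω | hit {y} ω < hitPlus S ω}).toReal
          / (μ y {ω | hit S ω < hitPlus {y} ω}).toReal := by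
  classical
  have := hμ.1
  rw [harm, hitsAt_F S x hx, F_val P μ hμ S {x} (by simpa using hx) y]
  by_cases hy : y ∈ S
  · have hden : μ y {ω | hit S ω < hitPlus {y} ω} = μ y Set.univ := by
      refine measure_congr ?_
      filter_upwards [start_ae P μ hμ y] with ω h0
      refine propext ⟨fun _ => trivial, fun _ => ?_⟩
      exact (hit_lt S {y} ω).2 ⟨0, by rwa [h0], fun i h1 h2 => by omega⟩
    rw [hden]
    by_cases hyx : y = x
    · subst hyx
      have hnum : μ y {ω | hit {y} ω < hitPlus S ω} = μ y Set.univ := by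
        refine measure_congr ?_
        filter_upwards [start_ae P μ hμ y] with ω h0
        refine propext ⟨fun _ => trivial, fun _ => ?_⟩
        exact (hit_lt {y} S ω).2 ⟨0, h0, fun i h1 h2 => by omega⟩
      rw [hnum]; simp
    · have hnum : μ x {ω | hit {y} ω < hitPlus S ω} = μ x ∅ := by
        refine measure_congr ?_
        filter_upwards [start_ae P μ hμ x] with ω h0
        refine propext ⟨fun h => ?_, fun h => h.elim⟩
        obtain ⟨n, hn, h⟩ := (hit_lt {y} S ω).1 h
        have hny : ω n = y := hn
        cases n with
        | zero => exact hyx (hny.symm.trans h0)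
        | succ n => exact h (n + 1) (by omega) le_rfl (by rwa [hny])
      rw [hnum]; simp [hyx, hy]
  · have hyx : y ≠ x := fun h => hy (h ▸ hx)
    rw [if_neg (by simpa using hyx), if_neg hy]
    set A : Set G := S ∪ {y} with hA
    have hSA : S ⊆ A := Set.subset_union_left
    have hyA : y ∈ A := Or.inr rfl
    have hmemA : ∀ c, c ∈ A ↔ c ∈ S ∨ c = y := fun c => Iff.rfl
    have hnum : μ x {ω | hit {y} ω < hitPlus S ω} = μ x (evE A {y}) := by
      refine measure_congr ?_
      filter_upwards [start_ae P μ hμ x] with ω h0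
      have := hit_lt_E {y} S (Set.disjoint_singleton_left.2 hy) ω
        (by rw [h0]; simpa using hyx.symm)
      rw [Set.union_comm] at this
      exact propext this
    have hden : μ y {ω | hit S ω < hitPlus {y} ω} = μ y (evE A S) := by
      refine measure_congr ?_
      filter_upwards [start_ae P μ hμ y] with ω h0
      exact propext (hit_lt_E S {y} (Set.disjoint_singleton_right.2 hy) ω (by rwa [h0]))
    rw [hnum, hden]
    have hrv := E_rev P hP pi hrev μ hμ A y x hyA (hSA hx)
    have rh := E_rec P hP μ hμ S {x} (by simpa using hx)
    have rq := E_rec P hP μ hμ A {x} (by simpa using hSA hx)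
    have rr := E_rec P hP μ hμ A {y} (by simpa using hyA)
    have rk := E_rec P hP μ hμ A S hSA
    generalize hr' : (fun a => (μ a (evE A {y})).toReal) = r at *
    generalize hk' : (fun a => (μ a (evE A S)).toReal) = k at *
    generalize hq' : (fun a => (μ a (evE A {x})).toReal) = q at *
    generalize hh' : (fun a => (μ a (evE S {x})).toReal) = h at *
    have er : ∀ a, (μ a (evE A {y})).toReal = r a := fun a => congrFun hr' a
    have ek : ∀ a, (μ a (evE A S)).toReal = k a := fun a => congrFun hk' a
    have eq : ∀ a, (μ a (evE A {x})).toReal = q a := fun a => congrFun hq' a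
    have eh : ∀ a, (μ a (evE S {x})).toReal = h a := fun a => congrFun hh' a
    simp only [er, ek, eq, eh, Set.mem_singleton_iff, hmemA] at rh rq rr rk hrv ⊢
    -- k + r = 1
    have hsum : ∀ a, k a + r a - 1 = 0 := by
      refine uniq P pi hP hirr hrev A ⟨y, hyA⟩ (fun a => k a + r a - 1) fun a => ?_
      rw [rk a, rr a]
      nth_rewrite 3 [← hP.2 a]
      rw [← Finset.sum_add_distrib, ← Finset.sum_sub_distrib]
      refine Finset.sum_congr rfl fun c _ => ?_
      by_cases h1 : c ∈ S
      · have h2 : c ≠ y := fun h => hy (h ▸ h1)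
        simp [h1, h2, hmemA]
      · by_cases h2 : c = y
        · simp [h1, h2, hmemA, hy]
        · simp [h1, h2, hmemA]; ring
    -- first return decomposition
    have hdec : ∀ a, h a - q a - r a * h y = 0 := by
      refine uniq P pi hP hirr hrev A ⟨y, hyA⟩ (fun a => h a - q a - r a * h y) fun a => ?_
      rw [rh a, rq a, rr a, Finset.sum_mul]
      rw [← Finset.sum_sub_distrib, ← Finset.sum_sub_distrib]
      refine Finset.sum_congr rfl fun c _ => ?_
      by_cases h0 : c = x
      · subst h0
        simp [hx, hyx.symm, hmemA]
      by_cases h1 : c ∈ S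
      · have h2 : c ≠ y := fun h => hy (h ▸ h1)
        simp [h0, h1, h2, hmemA]
      · by_cases h2 : c = y
        · subst h2
          simp [hy, hyx, hmemA]
        · simp [h0, h1, h2, hmemA]; ring
    have hk0 : k y ≠ 0 := by
      intro hk0
      have hall : ∀ a, k a - 1 = 0 := by
        refine uniq P pi hP hirr hrev S hS (fun a => k a - 1) fun a => ?_
        rw [rk a]
        nth_rewrite 2 [← hP.2 a]
        rw [← Finset.sum_sub_distrib]
        refine Finset.sum_congr rfl fun c _ => ?_
        by_cases h1 : c ∈ S
        · simp [h1]
        · by_cases h2 : c = y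
          · subst h2; simp [h1, hk0]
          · simp [h1, h2]; ring
      have := hall y
      rw [hk0] at this
      norm_num at this
    rw [eq_div_iff hk0, ← hrv]
    have e1 := hsum y
    have e2 := hdec y
    linear_combination pi y * h y * e1 + pi y * e2


end HM
end

section
/- For any nonempty set S ⊆ G and any x ∈ S, the harmonic measure from stationarity is bounded below by h_S(x) ≥ π(x) · E_x[ |{X_0, X_1, …, X_{T_S^+ − 1}}| ], the expected number of distinct states visited before the return time to S. -/
open MeasureTheory Finset
open scoped ENNReal

namespace HM

variable {G : Type*} [Fintype G] [DecidableEq G]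

variable [MeasurableSpace G]

section aux
variable {G : Type*} [Fintype G] [DecidableEq G]

/-- Restriction of a trajectory to times `0, …, n`. -/
def restr (n : ℕ) (ω : ℕ → G) : Fin (n + 1) → G := fun i => ω i

lemma measurable_restr [MeasurableSpace G] (n : ℕ) : Measurable (restr (G := G) n) :=
  measurable_pi_lambda _ fun i => measurable_pi_apply _

/-- Weight of a path. -/
def wt (P : Matrix G G ℝ) (n : ℕ) (w : Fin (n + 1) → G) : ℝ :=
  ∏ i : Fin n, P (w i.castSucc) (w i.succ)

lemma restr_measure [MeasurableSpace G] [MeasurableSingletonClass G]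
    (P : Matrix G G ℝ) (μ : G → Measure (ℕ → G)) (hμ : IsMarkovChain P μ) (z : G) (n : ℕ)
    (w : Fin (n + 1) → G) :
    μ z (restr n ⁻¹' {w}) = ENNReal.ofReal ((if w 0 = z then 1 else 0) * wt P n w) := by
  have h := hμ.2 z n (fun i => if h : i < n + 1 then w ⟨i, h⟩ else z)
  have e : (restr n ⁻¹' {w} : Set (ℕ → G)) =
      {ω | ∀ i ≤ n, ω i = (fun i => if h : i < n + 1 then w ⟨i, h⟩ else z) i} := by
    ext ω
    simp only [Set.mem_preimage, Set.mem_singleton_iff, Set.mem_ofPred_eq, funext_iff, restr]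
    constructor
    · intro H i hi
      have := H ⟨i, by omega⟩
      rw [dif_pos (by omega)]
      exact this
    · intro H i
      have := H i (by omega)
      rw [dif_pos (by omega)] at this
      exact this
  rw [e, h]
  congr 2
  rw [wt, ← Fin.prod_univ_eq_prod_range
    (fun i => P ((fun i => if h : i < n + 1 then w ⟨i, h⟩ else z) i)
      ((fun i => if h : i < n + 1 then w ⟨i, h⟩ else z) (i + 1))) n]
  refine Finset.prod_congr rfl fun i _ => ?_
  have h1 : (i : ℕ) < n + 1 := by omega
  have h2 : (i : ℕ) + 1 < n + 1 := by omega
  simp only [dif_pos h1, dif_pos h2]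
  rfl

open Classical in
lemma restr_measure_set [MeasurableSpace G] [MeasurableSingletonClass G]
    (P : Matrix G G ℝ) (μ : G → Measure (ℕ → G)) (hμ : IsMarkovChain P μ) (z : G) (n : ℕ)
    (W : Set (Fin (n + 1) → G)) :
    μ z (restr n ⁻¹' W) = ∑ w : Fin (n + 1) → G,
      if w ∈ W then ENNReal.ofReal ((if w 0 = z then 1 else 0) * wt P n w) else 0 := by
  rw [← Finset.sum_filter]
  have := sum_measure_preimage_singleton (μ := μ z) (f := restr n) (Finset.univ.filter (· ∈ W))
    (fun y _ => measurable_restr n (measurableSet_singleton y))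
  simp only [Finset.coe_filter, Finset.mem_univ, true_and, Set.ofPred_mem_eq] at this
  rw [← this]
  exact Finset.sum_congr rfl fun w _ => restr_measure P μ hμ z n w

lemma wt_rev (P : Matrix G G ℝ) (pi : G → ℝ) (hrev : IsReversible P pi) (n : ℕ)
    (w : Fin (n + 1) → G) :
    pi (w 0) * wt P n w = pi (w (Fin.last n)) * wt P n (w ∘ Fin.rev) := by
  have key : pi (w 0) * wt P n w =
      pi (w (Fin.last n)) * ∏ i : Fin n, P (w i.succ) (w i.castSucc) := by
    unfold wt
    induction n with
    | zero => simp
    | succ n ih =>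
      have := ih (fun i => w i.castSucc)
      rw [Fin.prod_univ_castSucc, Fin.prod_univ_castSucc]
      have h2 := hrev.2.2 (w (Fin.last n).castSucc) (w (Fin.last (n + 1)))
      simp only [Fin.succ_castSucc, Fin.castSucc_zero, Fin.succ_last] at *
      rw [← mul_assoc, this]
      linear_combination (∏ i : Fin n, P (w i.succ.castSucc) (w i.castSucc.castSucc)) * h2
  rw [key, wt]
  congr 1
  rw [← Equiv.prod_comp Fin.revPerm]
  refine Finset.prod_congr rfl fun i _ => ?_
  simp [Fin.rev_castSucc, Fin.rev_succ]

lemma reverse_measure [MeasurableSpace G] [MeasurableSingletonClass G]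
    (P : Matrix G G ℝ) (pi : G → ℝ) (μ : G → Measure (ℕ → G))
    (hrev : IsReversible P pi) (hμ : IsMarkovChain P μ) (S : Set G) (x y : G) (n : ℕ) :
    ENNReal.ofReal (pi x) * μ x {ω | (∀ i, 1 ≤ i → i ≤ n → ω i ∉ S) ∧ ω n = y} =
    ENNReal.ofReal (pi y) * μ y {ω | (∀ i, i < n → ω i ∉ S) ∧ ω n = x} := by
  classical
  have e1 : {ω : ℕ → G | (∀ i, 1 ≤ i → i ≤ n → ω i ∉ S) ∧ ω n = y} =
      restr n ⁻¹' {w | (∀ i : Fin (n + 1), 1 ≤ (i : ℕ) → w i ∉ S) ∧ w (Fin.last n) = y} := by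
    ext ω
    simp only [Set.mem_ofPred_eq, Set.mem_preimage, restr, Fin.val_last]
    refine and_congr_left fun _ => ⟨fun H i h => H i h (by omega), fun H i h h' => ?_⟩
    exact H ⟨i, by omega⟩ h
  have e2 : {ω : ℕ → G | (∀ i, i < n → ω i ∉ S) ∧ ω n = x} =
      restr n ⁻¹' {w | (∀ i : Fin (n + 1), (i : ℕ) < n → w i ∉ S) ∧ w (Fin.last n) = x} := by
    ext ω
    simp only [Set.mem_ofPred_eq, Set.mem_preimage, restr, Fin.val_last]
    refine and_congr_left fun _ => ⟨fun H i h => H i h, fun H i h => ?_⟩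
    exact H ⟨i, by omega⟩ h
  rw [e1, e2, restr_measure_set P μ hμ, restr_measure_set P μ hμ, Finset.mul_sum, Finset.mul_sum]
  rw [← Equiv.sum_comp (Equiv.arrowCongr (Fin.revPerm (n := n + 1)) (Equiv.refl G))
    (fun w => ENNReal.ofReal (pi y) * _)]
  refine Finset.sum_congr rfl fun w _ => ?_
  have hw : (Equiv.arrowCongr (Fin.revPerm (n := n + 1)) (Equiv.refl G)) w = w ∘ Fin.rev := by
    ext i; simp [Equiv.arrowCongr]
  rw [hw]
  have hiff : (∀ i : Fin (n + 1), 1 ≤ (i : ℕ) → w i ∉ S) ↔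
      (∀ i : Fin (n + 1), (i : ℕ) < n → (w ∘ Fin.rev) i ∉ S) := by
    constructor
    · intro H i hi
      exact H _ (by rw [Fin.val_rev]; omega)
    · intro H i hi
      have := H i.rev (by rw [Fin.val_rev]; omega)
      simpa using this
  simp only [Set.mem_ofPred_eq, hiff]
  simp only [Function.comp, Fin.rev_last, Fin.rev_zero]
  have hr := wt_rev P pi hrev n w
  by_cases hS : ∀ i : Fin (n + 1), (i : ℕ) < n → w i.rev ∉ S
  · by_cases h0 : w 0 = x
    · by_cases hl : w (Fin.last n) = y
      · simp only [hS, h0, hl, implies_true, and_self, if_true, one_mul] at hr ⊢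
        rw [if_pos ⟨hS, trivial⟩, if_pos ⟨hS, trivial⟩]
        rw [← ENNReal.ofReal_mul (hrev.1 x).le, ← ENNReal.ofReal_mul (hrev.1 y).le, hr]
      · simp [hl]
    · simp [h0]
  · simp only [hS, false_and, if_false, mul_zero]

lemma lt_hitPlus_iff (S : Set G) (ω : ℕ → G) (n : ℕ) :
    (n : ℕ∞) < hitPlus S ω ↔ ∀ i, 1 ≤ i → i ≤ n → ω i ∉ S := by
  rw [← not_le]
  constructor
  · intro H i h1 h2 h3
    have hle : hitPlus S ω ≤ (i : ℕ∞) := sInf_le ⟨i, ⟨h1, h3⟩, rfl⟩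
    exact H (hle.trans (by exact_mod_cast h2))
  · intro H hle
    have hne : ((↑) '' {n : ℕ | 1 ≤ n ∧ ω n ∈ S} : Set ℕ∞).Nonempty := by
      by_contra hn
      rw [Set.not_nonempty_iff_eq_empty] at hn
      rw [hitPlus, hn, sInf_empty] at hle
      exact absurd hle (by simp)
    obtain ⟨k, ⟨hk1, hk2⟩, hk⟩ := csInf_mem hne
    rw [hitPlus, ← hk] at hle
    exact H k hk1 (by exact_mod_cast hle) hk2

lemma hit_eq_of (S : Set G) (ω : ℕ → G) (n : ℕ) (h : ∀ i, i < n → ω i ∉ S) (hn : ω n ∈ S) :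
    hit S ω = n := by
  apply le_antisymm
  · exact sInf_le ⟨n, hn, rfl⟩
  · refine le_sInf ?_
    rintro _ ⟨k, hk, rfl⟩
    by_contra hlt
    exact h k (by exact_mod_cast not_le.1 hlt) hk

lemma visited_le (S : Set G) (ω : ℕ → G) :
    (visited S ω : ℝ≥0∞) ≤ ∑' n : ℕ,
      ({ω : ℕ → G | ∀ i, 1 ≤ i → i ≤ n → ω i ∉ S}.indicator 1 ω : ℝ≥0∞) := by
  classical
  set V := {g : G | ∃ n : ℕ, (n : ℕ∞) < hitPlus S ω ∧ ω n = g} with hV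
  have hch : ∀ g : V, ∃ n : ℕ, (n : ℕ∞) < hitPlus S ω ∧ ω n = g := fun g => g.2
  choose f hf1 hf2 using hch
  have hinj : Function.Injective f := fun a b hab => by
    apply Subtype.ext; rw [← hf2 a, ← hf2 b, hab]
  have hc : (visited S ω) = (Finset.univ.image f).card := by
    rw [Finset.card_image_of_injective _ hinj, Finset.card_univ, visited,
      ← Nat.card_coe_set_eq, Nat.card_eq_fintype_card]
  rw [hc]
  refine le_trans ?_ (ENNReal.sum_le_tsum (Finset.univ.image f))
  rw [← nsmul_one, ← Finset.sum_const]
  refine Finset.sum_le_sum fun k hk => ?_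
  obtain ⟨g, -, rfl⟩ := Finset.mem_image.1 hk
  rw [Set.indicator_of_mem]
  · simp
  · exact (lt_hitPlus_iff S ω _).1 (hf1 g)

end aux

/-- Lower bound: for `x ∈ S`,
`h_S(x) ≥ π(x) · E_x[|{X_0, …, X_{T_S^+−1}}|]`. -/
theorem stmt10 {G : Type*} [Fintype G] [DecidableEq G] [MeasurableSpace G] [MeasurableSingletonClass G]
    (P : Matrix G G ℝ) (pi : G → ℝ) (μ : G → Measure (ℕ → G))
    (hP : IsStochastic P) (hirr : IsIrreducible P) (hap : IsAperiodic P)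
    (hrev : IsReversible P pi) (hμ : IsMarkovChain P μ)
    (S : Set G) (hS : S.Nonempty) (x : G) (hx : x ∈ S) :
    pi x * (∫⁻ ω, (visited S ω : ℝ≥0∞) ∂ μ x).toReal ≤ harmStat pi μ S x := by
  classical
  have := hμ.1
  have hdisc : ∀ A : Set G, MeasurableSet A := fun A => A.toFinite.measurableSet
  have mN : ∀ n : ℕ, MeasurableSet {ω : ℕ → G | ω n ∉ S} := fun n =>
    measurableSet_preimage (measurable_pi_apply (X := fun _ : ℕ => G) n) (hdisc Sᶜ)
  have mE : ∀ (n : ℕ) (y : G), MeasurableSet {ω : ℕ → G | ω n = y} := fun n y =>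
    measurableSet_preimage (measurable_pi_apply (X := fun _ : ℕ => G) n) (hdisc {y})
  have mA : ∀ n : ℕ, MeasurableSet {ω : ℕ → G | ∀ i, 1 ≤ i → i ≤ n → ω i ∉ S} := by
    intro n
    simp only [Set.ofPred_forall]
    exact MeasurableSet.iInter fun i => MeasurableSet.iInter fun _ => MeasurableSet.iInter fun _ =>
      mN i
  have mB : ∀ n : ℕ, MeasurableSet {ω : ℕ → G | (∀ i, i < n → ω i ∉ S) ∧ ω n = x} := by
    intro n
    refine MeasurableSet.inter (s₁ := {ω : ℕ → G | ∀ i, i < n → ω i ∉ S}) ?_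
      (mE n x)
    simp only [Set.ofPred_forall]
    exact MeasurableSet.iInter fun i => MeasurableSet.iInter fun _ =>
      mN i
  have hA : ∀ n : ℕ, μ x {ω : ℕ → G | ∀ i, 1 ≤ i → i ≤ n → ω i ∉ S} =
      ∑ y, μ x {ω : ℕ → G | (∀ i, 1 ≤ i → i ≤ n → ω i ∉ S) ∧ ω n = y} := by
    intro n
    rw [← measure_biUnion_finset]
    · congr 1
      ext ω
      simp
    · intro a _ b _ hab
      refine Set.disjoint_left.2 ?_
      rintro ω ⟨_, h1⟩ ⟨_, h2⟩
      exact hab (h1.symm.trans h2)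
    · intro y _
      exact (mA n).inter (mE n y)
  have hB : ∀ y, ∑' n : ℕ, μ y {ω : ℕ → G | (∀ i, i < n → ω i ∉ S) ∧ ω n = x} ≤
      μ y (hitsAt S x) := by
    intro y
    rw [← measure_iUnion _ mB]
    · refine measure_mono (Set.iUnion_subset fun n => ?_)
      rintro ω ⟨h1, h2⟩
      exact ⟨n, hit_eq_of S ω n h1 (h2 ▸ hx), h2⟩
    · intro a b hab
      refine Set.disjoint_left.2 ?_
      rintro ω ⟨h1, h2⟩ ⟨h3, h4⟩
      rcases lt_or_gt_of_ne hab with h | h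
      · exact h3 a h (h2 ▸ hx)
      · exact h1 b h (h4 ▸ hx)
  have main : ENNReal.ofReal (pi x) * ∫⁻ ω, (visited S ω : ℝ≥0∞) ∂ μ x ≤
      ∑ y, ENNReal.ofReal (pi y) * μ y (hitsAt S x) := by
    calc _ ≤ ENNReal.ofReal (pi x) * ∫⁻ ω, ∑' n : ℕ,
          ({ω : ℕ → G | ∀ i, 1 ≤ i → i ≤ n → ω i ∉ S}.indicator 1 ω : ℝ≥0∞) ∂ μ x := by
          gcongr with ω
          exact visited_le S ω
      _ = ENNReal.ofReal (pi x) *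
          ∑' n : ℕ, μ x {ω : ℕ → G | ∀ i, 1 ≤ i → i ≤ n → ω i ∉ S} := by
          rw [lintegral_tsum fun n => (measurable_one.indicator (mA n)).aemeasurable]
          simp only [lintegral_indicator_one (mA _)]
      _ = ∑' n : ℕ, ∑ y, ENNReal.ofReal (pi y) *
          μ y {ω : ℕ → G | (∀ i, i < n → ω i ∉ S) ∧ ω n = x} := by
          rw [← ENNReal.tsum_mul_left]
          congr 1
          ext n
          rw [hA, Finset.mul_sum]
          exact Finset.sum_congr rfl fun y _ => reverse_measure P pi μ hrev hμ S x y n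
      _ = ∑ y, ENNReal.ofReal (pi y) * ∑' n : ℕ,
          μ y {ω : ℕ → G | (∀ i, i < n → ω i ∉ S) ∧ ω n = x} := by
          rw [Summable.tsum_finsetSum fun _ _ => ENNReal.summable]
          simp only [ENNReal.tsum_mul_left]
      _ ≤ _ := by
          gcongr with y
          exact hB y
  have hfin : ∀ y ∈ Finset.univ, ENNReal.ofReal (pi y) * μ y (hitsAt S x) ≠ ⊤ := fun y _ =>
    ENNReal.mul_ne_top ENNReal.ofReal_ne_top (measure_ne_top _ _)
  have h2 := ENNReal.toReal_mono (ENNReal.sum_ne_top.2 hfin) main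
  rw [ENNReal.toReal_mul, ENNReal.toReal_ofReal (hrev.1 x).le, ENNReal.toReal_sum hfin] at h2
  refine h2.trans (le_of_eq ?_)
  unfold harmStat harm
  refine Finset.sum_congr rfl fun y _ => ?_
  rw [ENNReal.toReal_mul, ENNReal.toReal_ofReal (hrev.1 y).le]

end HM
end
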